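/- (Theorem 4.3, conditional form of the two-stage guarantee.) Assume S is regular and the pointwise Γ-consistency hypothesis holds with Γ(t) = β·t^α for some α ∈ (0,1] and β > 0. For L ∈ A and s ∈ S set C^h_L(s) = (Σ_{j=1}^{n_e} c̄_j)·ℓ(s,0) + Σ_{j=1}^{n_e} (L + Σ_{j'≠j} c̄_{j'})·ℓ(s,j). Then for every L ∈ A and every s ∈ S, D(L,s) − D* ≤ (L − c̄_0) + (n_e·(l̄ + Σ_{j=1}^{n_e} C_j))^{1−α}·β·(C^h_L(s) − inf_{s'∈S} C^h_L(s'))^α. -/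

import Mathlib

open Finset

/-- Conditional deferral error `D(L,s)`. -/
noncomputable def Dcond (nE : ℕ) (cbar : Fin nE → ℝ)
    (sel : (Fin (nE + 1) → ℝ) → Fin (nE + 1)) (L : ℝ) (s : Fin (nE + 1) → ℝ) : ℝ :=
  (if sel s = 0 then L else 0) + ∑ j : Fin nE, if sel s = j.succ then cbar j else 0

/-- Best-in-class conditional deferral error `D* = min{c̄₀, c̄₁, ..., c̄_{n_e}}`, with
`c̄₀ = sInf A`. -/
noncomputable def Dstar (nE : ℕ) (cbar : Fin nE → ℝ) (A : Set ℝ) : ℝ :=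
  min (sInf A) (⨅ j, cbar j)

/-- Conditional surrogate error `C(L,s)`. -/
noncomputable def Ccond (nE : ℕ) (cbar : Fin nE → ℝ)
    (ℓ : (Fin (nE + 1) → ℝ) → Fin (nE + 1) → ℝ) (L : ℝ) (s : Fin (nE + 1) → ℝ) : ℝ :=
  (∑ j, cbar j) * ℓ s 0
    + ∑ j : Fin nE, (L + ∑ j' ∈ univ.erase j, cbar j') * ℓ s j.succ
    - ((nE : ℝ) - 1) * L

/-- Best-in-class conditional surrogate error `C*`. -/
noncomputable def Cstar (nE : ℕ) (cbar : Fin nE → ℝ)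
    (ℓ : (Fin (nE + 1) → ℝ) → Fin (nE + 1) → ℝ) (A : Set ℝ)
    (S : Set (Fin (nE + 1) → ℝ)) : ℝ :=
  sInf {u | ∃ L' ∈ A, ∃ s' ∈ S, u = Ccond nE cbar ℓ L' s'}


/-- Conditional two-stage surrogate error `C^h_L(s)` (no `−(n_e−1)L` term). -/
noncomputable def CcondTS (nE : ℕ) (cbar : Fin nE → ℝ)
    (ℓ : (Fin (nE + 1) → ℝ) → Fin (nE + 1) → ℝ) (L : ℝ) (s : Fin (nE + 1) → ℝ) : ℝ :=
  (∑ j, cbar j) * ℓ s 0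
    + ∑ j : Fin nE, (L + ∑ j' ∈ univ.erase j, cbar j') * ℓ s j.succ

/-!
Give label `j` the cost `c j`, with `c 0 = L` and `c j.succ = cbar j`. The two-stage surrogate
error is the surrogate risk under the unnormalised weights `w j = ∑ i, c i - c j`, and
`c (sel s) - c k = w k - w (sel s)` is at most the zero-one regret under the same weights as soon
as label `k` is selected by some prediction in `S`. Both regrets are homogeneous in the weights,
so consistency on probability vectors extends to weights of total mass `W` with `Γ` replaced by
`t ↦ W * Γ (t / W)`. For `Γ t = β * t ^ α` this is `W ^ (1 - α) * β * t ^ α`, which increases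
with `W` because `α ≤ 1`. Replacing the cost `L` of label `0` by `sInf A` in the benchmark accounts
for the extra term `L - sInf A`.
-/

section Regret

open scoped Pointwise

variable {H : Type*} {F : H → ℝ} {S : Set H} {s t : H}

/-- The regret of the prediction `s` for the objective `F`: the excess of `F s` over the best value
in the class `S`. The real infimum is the intended one when `F` is bounded below on `S` and `S` is
nonempty. -/
noncomputable def regret (F : H → ℝ) (S : Set H) (s : H) : ℝ :=
  F s - sInf (F '' S)

theorem regret_eq_sub_sInf_setOf (F : H → ℝ) (S : Set H) (s : H) :
    regret F S s = F s - sInf {v | ∃ s' ∈ S, v = F s'} := by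
  simp only [regret, Set.image, eq_comm]

theorem sub_le_regret (hF : BddBelow (F '' S)) (ht : t ∈ S) : F s - F t ≤ regret F S s :=
  sub_le_sub_left (csInf_le hF (Set.mem_image_of_mem F ht)) _

theorem regret_nonneg (hF : BddBelow (F '' S)) (hs : s ∈ S) : 0 ≤ regret F S s := by
  simpa only [sub_self] using sub_le_regret (s := s) hF hs

theorem regret_const_mul {a : ℝ} (ha : 0 ≤ a) (F : H → ℝ) (S : Set H) (s : H) :
    regret (fun s' => a * F s') S s = a * regret F S s := by
  have himage : (fun s' => a * F s') '' S = a • (F '' S) := by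
    rw [← Set.image_smul, Set.image_image]
    rfl
  rw [regret, himage, Real.sInf_smul_of_nonneg ha, smul_eq_mul, ← mul_sub, regret]

end Regret

section Consistency

variable {H ι : Type*}

/-- The zero-one loss of the decision rule `sel`. -/
def zeroOneLoss [DecidableEq ι] (sel : H → ι) (s : H) (j : ι) : ℝ :=
  if sel s ≠ j then 1 else 0

theorem zeroOneLoss_nonneg [DecidableEq ι] (sel : H → ι) (s : H) (j : ι) :
    0 ≤ zeroOneLoss sel s j := by
  unfold zeroOneLoss
  split_ifs <;> norm_num

variable [Fintype ι]

/-- The conditional risk of the prediction `s` for the loss `ℓ` when label `j` has weight `w j`. The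
weights need not sum to one. -/
def condRisk (w : ι → ℝ) (ℓ : H → ι → ℝ) (s : H) : ℝ :=
  ∑ j, w j * ℓ s j

theorem condRisk_smul (a : ℝ) (w : ι → ℝ) (ℓ : H → ι → ℝ) :
    condRisk (a • w) ℓ = fun s => a * condRisk w ℓ s := by
  funext s
  simp only [condRisk, Pi.smul_apply, smul_eq_mul, mul_assoc, mul_sum]

theorem regret_condRisk_smul {a : ℝ} (ha : 0 ≤ a) (w : ι → ℝ) (ℓ : H → ι → ℝ) (S : Set H) (s : H) :
    regret (condRisk (a • w) ℓ) S s = a * regret (condRisk w ℓ) S s := by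
  rw [condRisk_smul, regret_const_mul ha]

theorem bddBelow_condRisk_image {w : ι → ℝ} {ℓ : H → ι → ℝ} (hw : ∀ j, 0 ≤ w j)
    (hℓ : ∀ s j, 0 ≤ ℓ s j) (S : Set H) : BddBelow (condRisk w ℓ '' S) := by
  refine ⟨0, ?_⟩
  rintro _ ⟨s, _, rfl⟩
  exact sum_nonneg fun j _ => mul_nonneg (hw j) (hℓ s j)

variable [DecidableEq ι]

theorem condRisk_zeroOneLoss (w : ι → ℝ) (sel : H → ι) (s : H) :
    condRisk w (zeroOneLoss sel) s = ∑ j, w j - w (sel s) := by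
  simp only [condRisk, zeroOneLoss, mul_ite, mul_one, mul_zero, ← sum_filter, filter_ne,
    sum_erase_eq_sub (mem_univ (sel s))]

theorem sub_le_regret_zeroOneLoss {w : ι → ℝ} (hw : ∀ j, 0 ≤ w j) {sel : H → ι} {S : Set H} {t : H}
    (ht : t ∈ S) (s : H) :
    w (sel t) - w (sel s) ≤ regret (condRisk w (zeroOneLoss sel)) S s := by
  have h := sub_le_regret (s := s) (bddBelow_condRisk_image hw (zeroOneLoss_nonneg sel) S) ht
  simpa only [condRisk_zeroOneLoss, sub_sub_sub_cancel_left] using h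

/-- Pointwise `Γ`-consistency of the surrogate `ℓ` on the class `S`: for every label distribution,
the zero-one regret of the decision rule `sel` is at most `Γ` of the surrogate regret. -/
def IsPointwiseConsistent (Γ : ℝ → ℝ) (sel : H → ι) (ℓ : H → ι → ℝ) (S : Set H) : Prop :=
  ∀ p ∈ stdSimplex ℝ ι, ∀ s ∈ S,
    regret (condRisk p (zeroOneLoss sel)) S s ≤ Γ (regret (condRisk p ℓ) S s)

theorem isPointwiseConsistent_iff {Γ : ℝ → ℝ} {sel : H → ι} {ℓ : H → ι → ℝ} {S : Set H} :
    IsPointwiseConsistent Γ sel ℓ S ↔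
      ∀ p : ι → ℝ, (∀ j, 0 ≤ p j) → ∑ j, p j = 1 → ∀ s ∈ S,
        (∑ j, p j * (if sel s ≠ j then (1 : ℝ) else 0))
            - sInf {v | ∃ s' ∈ S, v = ∑ j, p j * (if sel s' ≠ j then (1 : ℝ) else 0)}
          ≤ Γ ((∑ j, p j * ℓ s j) - sInf {v | ∃ s' ∈ S, v = ∑ j, p j * ℓ s' j}) := by
  simp only [IsPointwiseConsistent, regret_eq_sub_sInf_setOf, condRisk, zeroOneLoss, stdSimplex,
    Set.mem_ofPred_eq, and_imp]

theorem IsPointwiseConsistent.regret_le_of_nonneg {Γ : ℝ → ℝ} {sel : H → ι} {ℓ : H → ι → ℝ}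
    {S : Set H} (h : IsPointwiseConsistent Γ sel ℓ S) {w : ι → ℝ} (hw : ∀ j, 0 ≤ w j)
    {s : H} (hs : s ∈ S) :
    regret (condRisk w (zeroOneLoss sel)) S s ≤
      (∑ j, w j) * Γ (regret (condRisk w ℓ) S s / ∑ j, w j) := by
  set W := ∑ j, w j
  have hW : 0 ≤ W := sum_nonneg fun j _ => hw j
  rcases hW.eq_or_lt with hzero | hpos
  · have hw_zero : w = (0 : ℝ) • w := by
      funext j
      simpa using (sum_eq_zero_iff_of_nonneg fun j _ => hw j).1 hzero.symm j (mem_univ j)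
    rw [hw_zero, regret_condRisk_smul le_rfl, ← hzero, zero_mul, zero_mul]
  · have hp : W⁻¹ • w ∈ stdSimplex ℝ ι :=
      ⟨fun j => mul_nonneg (inv_nonneg.2 hW) (hw j), by
        simp only [Pi.smul_apply, smul_eq_mul, ← mul_sum]
        exact inv_mul_cancel₀ hpos.ne'⟩
    have hnormalized := h _ hp s hs
    rwa [regret_condRisk_smul (inv_nonneg.2 hW), regret_condRisk_smul (inv_nonneg.2 hW),
      inv_mul_le_iff₀ hpos, inv_mul_eq_div] at hnormalized

end Consistency

section CostSensitive

variable {ι : Type*} [Fintype ι]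

/-- The total cost of the labels other than `j`. Used as label weights, these turn the zero-one
risk of a decision into its cost, up to a constant. -/
def othersCost (c : ι → ℝ) (j : ι) : ℝ :=
  ∑ i, c i - c j

theorem othersCost_nonneg {c : ι → ℝ} (hc : ∀ j, 0 ≤ c j) (j : ι) : 0 ≤ othersCost c j :=
  sub_nonneg.2 (single_le_sum (fun i _ => hc i) (mem_univ j))

theorem sum_othersCost (c : ι → ℝ) :
    ∑ j, othersCost c j = ((Fintype.card ι : ℝ) - 1) * ∑ j, c j := by
  simp only [othersCost, sum_sub_distrib, sum_const, card_univ, nsmul_eq_mul]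
  ring

theorem IsPointwiseConsistent.cost_sub_le {H : Type*} [DecidableEq ι] {Γ : ℝ → ℝ} {sel : H → ι}
    {ℓ : H → ι → ℝ} {S : Set H} (h : IsPointwiseConsistent Γ sel ℓ S) {c : ι → ℝ}
    (hc : ∀ j, 0 ≤ c j) {s t : H} (hs : s ∈ S) (ht : t ∈ S) :
    c (sel s) - c (sel t) ≤ (∑ j, othersCost c j) *
      Γ (regret (condRisk (othersCost c) ℓ) S s / ∑ j, othersCost c j) :=
  calc c (sel s) - c (sel t)
      = othersCost c (sel t) - othersCost c (sel s) := by simp only [othersCost]; ring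
    _ ≤ regret (condRisk (othersCost c) (zeroOneLoss sel)) S s :=
        sub_le_regret_zeroOneLoss (othersCost_nonneg hc) ht s
    _ ≤ _ := h.regret_le_of_nonneg (othersCost_nonneg hc) hs

theorem mul_mul_div_rpow_le {α β W M t : ℝ} (hα : α ≤ 1) (hβ : 0 ≤ β) (hW : 0 ≤ W) (hWM : W ≤ M)
    (ht : 0 ≤ t) : W * (β * (t / W) ^ α) ≤ M ^ (1 - α) * β * t ^ α := by
  rcases hW.eq_or_lt with rfl | hpos
  · rw [zero_mul]
    positivity
  · calc W * (β * (t / W) ^ α) = W ^ (1 - α) * β * t ^ α := by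
          rw [Real.div_rpow ht hW, Real.rpow_sub hpos, Real.rpow_one]
          ring
      _ ≤ M ^ (1 - α) * β * t ^ α := by
          have := Real.rpow_le_rpow hW hWM (sub_nonneg.2 hα)
          gcongr

theorem IsPointwiseConsistent.cost_sub_le_rpow {H : Type*} [DecidableEq ι] {α β M : ℝ}
    {sel : H → ι} {ℓ : H → ι → ℝ} {S : Set H}
    (h : IsPointwiseConsistent (fun t => β * t ^ α) sel ℓ S) (hα : α ≤ 1) (hβ : 0 ≤ β)
    (hℓ : ∀ s j, 0 ≤ ℓ s j) {c : ι → ℝ} (hc : ∀ j, 0 ≤ c j)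
    (hM : ((Fintype.card ι : ℝ) - 1) * ∑ j, c j ≤ M) {s t : H} (hs : s ∈ S) (ht : t ∈ S) :
    c (sel s) - c (sel t) ≤
      M ^ (1 - α) * β * regret (condRisk (othersCost c) ℓ) S s ^ α := by
  have hweight := othersCost_nonneg hc
  rw [← sum_othersCost] at hM
  exact (h.cost_sub_le hc hs ht).trans <|
    mul_mul_div_rpow_le hα hβ (sum_nonneg fun j _ => hweight j) hM
      (regret_nonneg (bddBelow_condRisk_image hweight hℓ S) hs)

end CostSensitive

section Deferral

variable {nE : ℕ} (cbar : Fin nE → ℝ) (L : ℝ)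

/-- The costs of the labels in deferral: label `0` (the predictor itself) costs `L`, and
label `j.succ` (expert `j`) costs `cbar j`. -/
def deferralCost : Fin (nE + 1) → ℝ :=
  Fin.cons L cbar

theorem sum_deferralCost : ∑ j, deferralCost cbar L j = L + ∑ j, cbar j :=
  Fin.sum_cons L cbar

theorem deferralCost_nonneg {cbar : Fin nE → ℝ} {L : ℝ} (hL : 0 ≤ L) (hcbar : ∀ j, 0 ≤ cbar j)
    (j : Fin (nE + 1)) : 0 ≤ deferralCost cbar L j :=
  Fin.cases hL hcbar j

theorem Dcond_eq_deferralCost (sel : (Fin (nE + 1) → ℝ) → Fin (nE + 1)) (s : Fin (nE + 1) → ℝ) :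
    Dcond nE cbar sel L s = deferralCost cbar L (sel s) :=
  calc Dcond nE cbar sel L s
      = ∑ j, if sel s = j then deferralCost cbar L j else 0 := by
        rw [Fin.sum_univ_succ]
        rfl
    _ = deferralCost cbar L (sel s) := by simp only [sum_ite_eq, mem_univ, if_true]

theorem CcondTS_eq_condRisk (ℓ : (Fin (nE + 1) → ℝ) → Fin (nE + 1) → ℝ)
    (s : Fin (nE + 1) → ℝ) :
    CcondTS nE cbar ℓ L s = condRisk (othersCost (deferralCost cbar L)) ℓ s := by
  have hzero : othersCost (deferralCost cbar L) 0 = ∑ j, cbar j := by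
    rw [othersCost, sum_deferralCost]
    exact add_sub_cancel_left L _
  have hsucc (j : Fin nE) :
      othersCost (deferralCost cbar L) j.succ = L + ∑ j' ∈ univ.erase j, cbar j' := by
    rw [othersCost, sum_deferralCost, sum_erase_eq_sub (mem_univ j), ← add_sub_assoc]
    rfl
  simp only [CcondTS, condRisk, Fin.sum_univ_succ, hzero, hsucc]

theorem sub_Dstar_le {cbar : Fin nE → ℝ} {L : ℝ} (hnE : 1 ≤ nE) {A : Set ℝ} (hA : BddBelow A)
    (hL : L ∈ A) {x B : ℝ} (hx : ∀ k, x - deferralCost cbar L k ≤ B) :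
    x - Dstar nE cbar A ≤ (L - sInf A) + B := by
  have : Nonempty (Fin nE) := ⟨⟨0, hnE⟩⟩
  have hinf : sInf A ≤ L := csInf_le hA hL
  have hpredictor : x - L ≤ B := hx 0
  have hexpert (j : Fin nE) : x - cbar j ≤ B := hx j.succ
  have hbound : x - (L - sInf A) - B ≤ Dstar nE cbar A :=
    le_min (by linarith) (le_ciInf fun j => by linarith [hexpert j])
  linarith

end Deferral

theorem two_stage_full_consistency_bound_conditional_general {H : Type*} {nE : ℕ} (hnE : 1 ≤ nE)
    {sel : H → Fin (nE + 1)} {S : Set H} (hreg : ∀ j, ∃ s ∈ S, sel s = j)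
    {ℓ : H → Fin (nE + 1) → ℝ} (hℓ : ∀ s j, 0 ≤ ℓ s j) {lbar : ℝ} {C : Fin nE → ℝ}
    {A : Set ℝ} (hA : A ⊆ Set.Icc 0 lbar) {cbar : Fin nE → ℝ}
    (hcbar : ∀ j, cbar j ∈ Set.Icc 0 (C j)) {α β : ℝ} (hα : α ≤ 1) (hβ : 0 ≤ β)
    (hcons : IsPointwiseConsistent (fun t => β * t ^ α) sel ℓ S)
    {L : ℝ} (hL : L ∈ A) {s : H} (hs : s ∈ S) :
    deferralCost cbar L (sel s) - Dstar nE cbar A ≤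
      (L - sInf A) + ((nE : ℝ) * (lbar + ∑ j, C j)) ^ (1 - α) * β
        * regret (condRisk (othersCost (deferralCost cbar L)) ℓ) S s ^ α := by
  obtain ⟨hL_nonneg, hL_le⟩ := hA hL
  have hmass : ((Fintype.card (Fin (nE + 1)) : ℝ) - 1) * ∑ j, deferralCost cbar L j ≤
      (nE : ℝ) * (lbar + ∑ j, C j) := by
    rw [Fintype.card_fin, Nat.cast_succ, add_sub_cancel_right, sum_deferralCost]
    gcongr with j
    exact (hcbar j).2
  refine sub_Dstar_le hnE (bddBelow_Icc.mono hA) hL fun k => ?_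
  obtain ⟨t, ht, rfl⟩ := hreg k
  exact hcons.cost_sub_le_rpow hα hβ hℓ
    (deferralCost_nonneg hL_nonneg fun j => (hcbar j).1) hmass hs ht

/-- Theorem 4.3, conditional form of the two-stage guarantee. -/
theorem two_stage_full_consistency_bound_conditional (nE : ℕ) (hnE : 1 ≤ nE)
    (sel : (Fin (nE + 1) → ℝ) → Fin (nE + 1))
    (hsel : ∀ (s : Fin (nE + 1) → ℝ) (j : Fin (nE + 1)), s j ≤ s (sel s))
    (S : Set (Fin (nE + 1) → ℝ)) (hS : S.Nonempty)
    (hreg : ∀ j : Fin (nE + 1), ∃ s ∈ S, sel s = j)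
    (ℓ : (Fin (nE + 1) → ℝ) → Fin (nE + 1) → ℝ)
    (hℓ0 : ∀ s j, 0 ≤ ℓ s j)
    (hℓ1 : ∀ s j, j ≠ sel s → 1 ≤ ℓ s j)
    (lbar : ℝ) (hlbar : 0 < lbar)
    (C : Fin nE → ℝ) (hC : ∀ j, 0 < C j)
    (A : Set ℝ) (hA : A.Nonempty) (hAsub : A ⊆ Set.Icc 0 lbar)
    (cbar : Fin nE → ℝ) (hcbar : ∀ j, cbar j ∈ Set.Icc 0 (C j))
    (α β : ℝ) (hα : α ∈ Set.Ioc (0 : ℝ) 1) (hβ : 0 < β)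
    (hcons : ∀ p : Fin (nE + 1) → ℝ, (∀ j, 0 ≤ p j) → (∑ j, p j) = 1 → ∀ s ∈ S,
      (∑ j, p j * (if sel s ≠ j then (1 : ℝ) else 0))
          - sInf {v | ∃ s' ∈ S, v = ∑ j, p j * (if sel s' ≠ j then (1 : ℝ) else 0)}
        ≤ β * ((∑ j, p j * ℓ s j)
          - sInf {v | ∃ s' ∈ S, v = ∑ j, p j * ℓ s' j}) ^ α)
    (L : ℝ) (hL : L ∈ A) (s : Fin (nE + 1) → ℝ) (hs : s ∈ S) :
    Dcond nE cbar sel L s - Dstar nE cbar A ≤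
      (L - sInf A)
        + ((nE : ℝ) * (lbar + ∑ j, C j)) ^ (1 - α) * β
          * (CcondTS nE cbar ℓ L s
              - sInf {v | ∃ s' ∈ S, v = CcondTS nE cbar ℓ L s'}) ^ α := by
  simp only [Dcond_eq_deferralCost, CcondTS_eq_condRisk, ← regret_eq_sub_sInf_setOf]
  exact two_stage_full_consistency_bound_conditional_general hnE hreg hℓ0 hAsub hcbar hα.2 hβ.le
    (isPointwiseConsistent_iff.2 hcons) hL hs
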